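/- arXiv:1710.06694 — 2 statements merged into one kernel-verified Lean document; each statement's English description precedes it below -/
import Mathlib

section
/- Let (W,T) be an affine dual Coxeter system of rank n+1 arising from a crystallographic root system Φ, let x ∈ W with ℓ_T(x) = m ≥ n+1, and let (s_{β_1,k_1},…,s_{β_m,k_m}) ∈ Red_T(x). Then there exist roots β'_i ∈ Φ and integers k'_i ∈ ℤ such that (s_{β_1,k_1},…,s_{β_m,k_m}) is Hurwitz equivalent to (s_{β'_1,k'_1},…,s_{β'_{m−1},k'_{m−1}}, s_{β'_{m−1},k'_m}), i.e. to a reduced factorization whose last two reflections have the same root. -/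
open scoped RealInnerProductSpace

noncomputable section

variable {V : Type*} [NormedAddCommGroup V] [InnerProductSpace ℝ V]

/-- The coroot `α^∨ = 2α/(α|α)` of a vector `α`. -/
def coroot (α : V) : V := (2 / ⟪α, α⟫) • α

/-- The affine reflection `s_{α,k} : v ↦ v - ((v|α) - k)α^∨`, as a function. -/
def sAffFun (α : V) (k : ℝ) (v : V) : V := v - (⟪v, α⟫ - k) • coroot α

theorem sAffFun_involutive (α : V) (k : ℝ) : Function.Involutive (sAffFun α k) := by
  intro v
  by_cases h : α = 0
  · simp [sAffFun, coroot, h]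
  · have h2 : ⟪α, α⟫ ≠ 0 := by
      intro hz
      exact h (inner_self_eq_zero.mp hz)
    have hr : ⟪coroot α, α⟫ = 2 := by
      simp only [coroot, real_inner_smul_left]
      field_simp
    simp only [sAffFun, inner_sub_left, real_inner_smul_left, hr]
    have : ⟪v, α⟫ - (⟪v, α⟫ - k) * 2 - k = -(⟪v, α⟫ - k) := by ring
    rw [this, neg_smul, sub_neg_eq_add, sub_add_cancel]

/-- The affine reflection `s_{α,k}` as a permutation of `V`. -/
def sAff (α : V) (k : ℝ) : Equiv.Perm V :=
  Function.Involutive.toPerm _ (sAffFun_involutive α k)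

/-- The translation `Tr(x) : v ↦ v + x`, as a function. -/
def trFun (x : V) (v : V) : V := v + x

/-- The translation `Tr(x) : v ↦ v + x`, as a permutation of `V`. -/
def trPerm (x : V) : Equiv.Perm V := Equiv.addRight x

/-- A crystallographic (reduced) root system in a Euclidean space `V`. -/
structure IsCrystRootSystem (Φ : Set V) : Prop where
  finite : Φ.Finite
  nonempty : Φ.Nonempty
  ne_zero : ∀ α ∈ Φ, α ≠ 0
  spanning : Submodule.span ℝ Φ = ⊤
  refl_mem : ∀ α ∈ Φ, ∀ β ∈ Φ, sAffFun α 0 β ∈ Φ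
  reduced : ∀ α ∈ Φ, ∀ c : ℝ, c • α ∈ Φ → c = 1 ∨ c = -1
  cryst : ∀ α ∈ Φ, ∀ β ∈ Φ, ∃ n : ℤ, 2 * ⟪β, α⟫ / ⟪α, α⟫ = (n : ℝ)

/-- The (finite) Weyl group of `Φ`, generated by the reflections `s_α`. -/
def WeylGroup (Φ : Set V) : Subgroup (Equiv.Perm V) :=
  Subgroup.closure {g | ∃ α ∈ Φ, g = sAff α 0}

/-- The affine Weyl group of `Φ`, generated by all affine reflections `s_{α,k}`, `k ∈ ℤ`. -/
def AffWeylGroup (Φ : Set V) : Subgroup (Equiv.Perm V) :=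
  Subgroup.closure {g | ∃ α ∈ Φ, ∃ k : ℤ, g = sAff α k}

/-- The set of reflections of the affine Weyl group. -/
def AffReflections (Φ : Set V) : Set (Equiv.Perm V) :=
  {g | ∃ α ∈ Φ, ∃ k : ℤ, g = sAff α k}

/-- The coweight lattice `P(Φ^∨) = {x | (x|α) ∈ ℤ for all α ∈ Φ}`. -/
def coweightLattice (Φ : Set V) : Set V :=
  {x | ∀ α ∈ Φ, ∃ n : ℤ, ⟪x, α⟫ = (n : ℝ)}

/-- `Φ` is irreducible: it admits no decomposition into two nonempty orthogonal parts. -/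
def IsIrreducibleRS (Φ : Set V) : Prop :=
  ∀ Φ₁ Φ₂ : Set V, Φ₁ ∪ Φ₂ = Φ → (∀ α ∈ Φ₁, ∀ β ∈ Φ₂, ⟪α, β⟫ = 0) →
    Φ₁ = ∅ ∨ Φ₂ = ∅

section Hurwitz

variable {G : Type*} [Group G]

/-- One Hurwitz move: replace two adjacent entries `(a, b)` by `(a * b * a⁻¹, a)`. -/
def HurwitzMove (l l' : List G) : Prop :=
  ∃ (u v : List G) (a b : G),
    l = u ++ a :: b :: v ∧ l' = u ++ (a * b * a⁻¹) :: a :: v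

/-- Hurwitz equivalence: two tuples are Hurwitz equivalent iff they lie in the same
orbit of the Hurwitz action of the braid group. -/
def HurwitzEquiv (l l' : List G) : Prop := Relation.EqvGen HurwitzMove l l'

/-- The reflection length `ℓ_T(w)` of `w` with respect to a generating set `T`. -/
noncomputable def reflLength (T : Set G) (w : G) : ℕ :=
  sInf {k | ∃ l : List G, (∀ t ∈ l, t ∈ T) ∧ l.prod = w ∧ l.length = k}

/-- `l` is a reduced `T`-factorization of `w`, i.e. an element of `Red_T(w)`. -/
def IsRedFac (T : Set G) (w : G) (l : List G) : Prop :=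
  (∀ t ∈ l, t ∈ T) ∧ l.prod = w ∧ l.length = reflLength T w

end Hurwitz

/-!
The linear parts of the affine reflections form a finite set of orthogonal reflections that is
stable under conjugation, and a Hurwitz equivalence of tuples of linear parts lifts to the tuples
of affine reflections. Equal linear parts mean equal roots up to sign, and `s_{-α,-k} = s_{α,k}`,
so it suffices to make two linear reflections coincide and to move them to the end.

A product of `d + 1` reflections in hyperplanes of a `d`-dimensional space has determinant
`(-1) ^ (d + 1)`, hence fixes some `v ≠ 0`. In the finite Hurwitz orbit, choose a tuple maximizing
the sum of `⟪g v, v⟫` over its suffix products `g`. If some reflection of the tuple moves `v`, then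
the suffix values start and end at the maximum `⟪v, v⟫` and dip in between. At a local minimum,
either the two adjacent reflections are equal or a Hurwitz move of them increases the sum. So
either two adjacent reflections are equal, or all of them fix `v` and one inducts on `v^⊥`.
-/

/-! ### Hurwitz equivalence -/

/-- A subset of a group that is stable under conjugation by its own elements and their inverses,
so that the tuples with entries in it are permuted by the Hurwitz moves. -/
def ConjStable {G : Type*} [Group G] (T : Set G) : Prop :=
  ∀ a ∈ T, ∀ b, a * b * a⁻¹ ∈ T ↔ b ∈ T

theorem ConjStable.of_involutions {G : Type*} [Group G] {T : Set G} (hinv : ∀ a ∈ T, a * a = 1)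
    (hconj : ∀ a ∈ T, ∀ b ∈ T, a * b * a⁻¹ ∈ T) : ConjStable T := by
  refine fun a ha b => ⟨fun h => ?_, hconj a ha b⟩
  have hab : a * (a * b * a⁻¹) * a⁻¹ = b := by
    rw [inv_eq_of_mul_eq_one_left (hinv a ha)]
    calc a * (a * b * a) * a = (a * a) * b * (a * a) := by group
      _ = b := by rw [hinv a ha, one_mul, mul_one]
  exact hab ▸ hconj a ha _ h

theorem ConjStable.inter_subgroup {G : Type*} [Group G] {T : Set G} (hT : ConjStable T)
    (S : Subgroup G) : ConjStable (T ∩ S) := fun a ha b => by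
  have hS : a * b * a⁻¹ ∈ S ↔ b ∈ S := by
    rw [S.mul_mem_cancel_right (S.inv_mem ha.2), S.mul_mem_cancel_left ha.2]
  exact and_congr (hT a ha.1 b) hS

namespace HurwitzEquiv

variable {G H : Type*} [Group G] [Group H] {l l' l'' : List G}

theorem refl (l : List G) : HurwitzEquiv l l := Relation.EqvGen.refl l

theorem symm (h : HurwitzEquiv l l') : HurwitzEquiv l' l := Relation.EqvGen.symm _ _ h

theorem trans (h : HurwitzEquiv l l') (h' : HurwitzEquiv l' l'') : HurwitzEquiv l l'' :=
  Relation.EqvGen.trans _ _ _ h h'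

theorem conj_left (u v : List G) (a b : G) :
    HurwitzEquiv (u ++ a :: b :: v) (u ++ (a * b * a⁻¹) :: a :: v) :=
  Relation.EqvGen.rel _ _ ⟨u, v, a, b, rfl, rfl⟩

theorem conj_right (u v : List G) (a b : G) :
    HurwitzEquiv (u ++ a :: b :: v) (u ++ b :: (b⁻¹ * a * b) :: v) := by
  have h := conj_left u v b (b⁻¹ * a * b)
  rw [show b * (b⁻¹ * a * b) * b⁻¹ = a by group] at h
  exact h.symm

theorem invariant {α : Type*} {f : List G → α} (hf : ∀ m m', HurwitzMove m m' → f m = f m')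
    (h : HurwitzEquiv l l') : f l = f l' :=
  congrArg (Quot.lift f hf) (Quot.eqvGen_sound h)

theorem prod_eq (h : HurwitzEquiv l l') : l.prod = l'.prod := by
  refine h.invariant ?_
  rintro _ _ ⟨u, v, a, b, rfl, rfl⟩
  simp [mul_assoc]

theorem length_eq (h : HurwitzEquiv l l') : l.length = l'.length := by
  refine h.invariant ?_
  rintro _ _ ⟨u, v, a, b, rfl, rfl⟩
  simp

theorem forall_mem_iff {T : Set G} (hT : ConjStable T) (h : HurwitzEquiv l l') :
    (∀ t ∈ l, t ∈ T) ↔ ∀ t ∈ l', t ∈ T := by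
  refine iff_of_eq (h.invariant (f := fun m => ∀ t ∈ m, t ∈ T) ?_)
  rintro _ _ ⟨u, v, a, b, rfl, rfl⟩
  simp only [List.forall_mem_append, List.forall_mem_cons, eq_iff_iff]
  have hab : a ∈ T → (a * b * a⁻¹ ∈ T ↔ b ∈ T) := fun ha => hT a ha b
  tauto

theorem congr_of_move {f : List G → List H}
    (hf : ∀ m m', HurwitzMove m m' → HurwitzEquiv (f m) (f m')) (h : HurwitzEquiv l l') :
    HurwitzEquiv (f l) (f l') := by
  induction h with
  | rel m m' hm => exact hf m m' hm
  | refl m => exact refl _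
  | symm m m' _ ih => exact ih.symm
  | trans m m' m'' _ _ ih ih' => exact ih.trans ih'

theorem append_left (p : List G) (h : HurwitzEquiv l l') : HurwitzEquiv (p ++ l) (p ++ l') := by
  refine h.congr_of_move ?_
  rintro _ _ ⟨u, v, a, b, rfl, rfl⟩
  simpa using conj_left (p ++ u) v a b

theorem append_right (s : List G) (h : HurwitzEquiv l l') : HurwitzEquiv (l ++ s) (l' ++ s) := by
  refine h.congr_of_move (f := (· ++ s)) ?_
  rintro _ _ ⟨u, v, a, b, rfl, rfl⟩
  simpa using conj_left u (v ++ s) a b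

theorem map (f : G →* H) (h : HurwitzEquiv l l') : HurwitzEquiv (l.map f) (l'.map f) := by
  refine h.congr_of_move ?_
  rintro _ _ ⟨u, v, a, b, rfl, rfl⟩
  simpa using conj_left (u.map f) (v.map f) (f a) (f b)

theorem exists_of_map (f : G →* H) {m' : List H} (h : HurwitzEquiv (l.map f) m') :
    ∃ l', HurwitzEquiv l l' ∧ l'.map f = m' := by
  suffices H : ∀ m m', HurwitzEquiv m m' →
      (∀ l : List G, l.map f = m → ∃ l', HurwitzEquiv l l' ∧ l'.map f = m') ∧
      ∀ l : List G, l.map f = m' → ∃ l', HurwitzEquiv l l' ∧ l'.map f = m from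
    (H _ _ h).1 l rfl
  intro m m' h
  induction h with
  | rel m m' hm =>
    obtain ⟨u, v, a, b, rfl, rfl⟩ := hm
    constructor
    · intro l hl
      obtain ⟨u, _, rfl, rfl, hw⟩ := List.map_eq_append_iff.1 hl
      obtain ⟨a, _, rfl, rfl, hw'⟩ := List.map_eq_cons_iff.1 hw
      obtain ⟨b, v, rfl, rfl, rfl⟩ := List.map_eq_cons_iff.1 hw'
      exact ⟨_, conj_left u v a b, by simp⟩
    · intro l hl
      obtain ⟨u, _, rfl, rfl, hw⟩ := List.map_eq_append_iff.1 hl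
      obtain ⟨c, _, rfl, hc, hw'⟩ := List.map_eq_cons_iff.1 hw
      obtain ⟨a, v, rfl, rfl, rfl⟩ := List.map_eq_cons_iff.1 hw'
      exact ⟨_, conj_right u v c a, by simp [hc, mul_assoc]⟩
  | refl m => exact ⟨fun l hl => ⟨l, refl l, hl⟩, fun l hl => ⟨l, refl l, hl⟩⟩
  | symm m m' _ ih => exact ih.symm
  | trans m m' m'' _ _ ih ih' =>
    refine ⟨fun l hl => ?_, fun l hl => ?_⟩
    · obtain ⟨l', h₁, hl'⟩ := ih.1 l hl
      obtain ⟨l'', h₂, hl''⟩ := ih'.1 l' hl'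
      exact ⟨l'', h₁.trans h₂, hl''⟩
    · obtain ⟨l', h₁, hl'⟩ := ih'.2 l hl
      obtain ⟨l'', h₂, hl''⟩ := ih.2 l' hl'
      exact ⟨l'', h₁.trans h₂, hl''⟩

theorem cons_append_singleton (a : G) (s : List G) :
    HurwitzEquiv (a :: s) (s ++ [s.prod⁻¹ * a * s.prod]) := by
  induction s generalizing a with
  | nil => simpa using refl [a]
  | cons b s ih =>
    refine (conj_right [] s a b).trans ?_
    simpa [mul_assoc] using (ih (b⁻¹ * a * b)).append_left [b]

theorem exists_append_pair {p : List G} {a : G} (hl : HurwitzEquiv l (p ++ [a, a]))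
    (s : List G) : ∃ q b, HurwitzEquiv (l ++ s) (q ++ [b, b]) := by
  refine ⟨p ++ s, s.prod⁻¹ * a * s.prod, (hl.append_right s).trans ?_⟩
  have h := (cons_append_singleton a s).append_left [a]
  have h' := (cons_append_singleton a s).append_right [s.prod⁻¹ * a * s.prod]
  simpa using (h.trans h').append_left p

theorem finite_setOf {T : Set G} (hfin : T.Finite) (hT : ConjStable T) (hl : ∀ t ∈ l, t ∈ T) :
    {l' | HurwitzEquiv l l'}.Finite := by
  have := hfin.to_subtype
  refine ((List.finite_length_eq T l.length).image (List.map Subtype.val)).subset fun l' h => ?_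
  obtain ⟨m, rfl⟩ : l' ∈ Set.range (List.map ((↑) : T → G)) :=
    Set.range_list_map_coe T ▸ (h.forall_mem_iff hT).1 hl
  exact ⟨m, by simpa using h.length_eq.symm, rfl⟩

end HurwitzEquiv

/-! ### Orthogonal reflections and suffix energy -/

theorem exists_suffix_valley {α β : Type*} [LinearOrder β] (F : List α → β) {l s : List α}
    (hs : s <:+ l) (hnil : F s < F []) (hl : F s < F l) :
    ∃ P a b S, l = P ++ a :: b :: S ∧ F (b :: S) < F (a :: b :: S) ∧ F (b :: S) ≤ F S := by
  induction l generalizing s with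
  | nil => simp_all
  | cons a l ih =>
    have hsl : s <:+ l := (List.suffix_cons_iff.1 hs).resolve_left (by rintro rfl; simp at hl)
    have extend {P b c S} (h : l = P ++ b :: c :: S) : a :: l = (a :: P) ++ b :: c :: S := by
      simp [h]
    rcases le_or_gt (F (a :: l)) (F l) with hal | hal
    · obtain ⟨P, b, c, S, h, hbc⟩ := ih hsl hnil (hl.trans_le hal)
      exact ⟨a :: P, b, c, S, extend h, hbc⟩
    match l, hsl with
    | [], hsl => simp_all
    | b :: S, hsl =>
      rcases le_or_gt (F (b :: S)) (F S) with hbS | hbS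
      · exact ⟨[], a, b, S, rfl, hal, hbS⟩
      obtain ⟨s', hs', hnil', hl'⟩ : ∃ s', s' <:+ b :: S ∧ F s' < F [] ∧ F s' < F (b :: S) := by
        rcases lt_or_ge (F S) (F []) with hS | hS
        · exact ⟨S, List.suffix_cons b S, hS, hbS⟩
        · exact ⟨s, hsl, hnil, hnil.trans_le (hS.trans hbS.le)⟩
      obtain ⟨P, c, d, R, h, hcd⟩ := ih hs' hnil' hl'
      exact ⟨a :: P, c, d, R, extend h, hcd⟩

/-- The orthogonal reflection in the hyperplane `a^⊥`, which is the linear part of every affine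
reflection `s_{a,k}`; it is the identity for `a = 0`. -/
def rootReflection (a : V) : V ≃ₗᵢ[ℝ] V := (ℝ ∙ a)ᗮ.reflection

theorem rootReflection_apply (a v : V) : rootReflection a v = v - ⟪v, a⟫ • coroot a := by
  rw [rootReflection, Submodule.reflection_orthogonal_apply, Submodule.reflection_singleton_apply,
    coroot, neg_sub, smul_smul, two_nsmul, ← add_smul, real_inner_comm,
    real_inner_self_eq_norm_sq]
  congr 2
  simp only [RCLike.ofReal_real_eq_id, id_eq]
  ring

theorem rootReflection_mul_self (a : V) : rootReflection a * rootReflection a = 1 :=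
  Submodule.reflection_mul_reflection _

theorem rootReflection_rootReflection (a v : V) : rootReflection a (rootReflection a v) = v :=
  DFunLike.congr_fun (rootReflection_mul_self a) v

theorem rootReflection_inv (a : V) : (rootReflection a)⁻¹ = rootReflection a :=
  Submodule.reflection_inv

theorem rootReflection_self (a : V) : rootReflection a a = -a :=
  Submodule.reflection_orthogonalComplement_singleton_eq_neg a

theorem rootReflection_apply_eq_self_iff {a v : V} : rootReflection a v = v ↔ ⟪a, v⟫ = 0 := by
  rw [rootReflection, Submodule.reflection_eq_self_iff,
    Submodule.mem_orthogonal_singleton_iff_inner_right]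

theorem inner_rootReflection (a u v : V) :
    ⟪rootReflection a u, v⟫ = ⟪u, v⟫ - ⟪u, a⟫ * ⟪coroot a, v⟫ := by
  rw [rootReflection_apply, inner_sub_left, real_inner_smul_left]

theorem coroot_map (g : V ≃ₗᵢ[ℝ] V) (a : V) : coroot (g a) = g (coroot a) := by
  simp only [coroot, g.inner_map_map, map_smul]

theorem rootReflection_map (g : V ≃ₗᵢ[ℝ] V) (a : V) :
    rootReflection (g a) = g * rootReflection a * g⁻¹ := by
  ext v
  have hv : ⟪v, g a⟫ = ⟪g⁻¹ v, a⟫ := by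
    rw [← g.inner_map_map (g⁻¹ v) a]
    exact congrArg (⟪·, g a⟫) (g.apply_symm_apply v).symm
  rw [rootReflection_apply, hv, coroot_map]
  change _ = g (rootReflection a (g⁻¹ v))
  rw [rootReflection_apply, map_sub, map_smul]
  exact congrArg (· - _) (g.apply_symm_apply v).symm

theorem exists_eq_smul_of_rootReflection_eq {a b : V} (h : rootReflection a = rootReflection b) :
    ∃ c : ℝ, b = c • a := by
  have hb : rootReflection a b = -b := by rw [h, rootReflection_self]
  rw [rootReflection_apply, coroot, smul_smul] at hb
  refine ⟨2⁻¹ * (⟪b, a⟫ * (2 / ⟪a, a⟫)), ?_⟩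
  rw [mul_smul, eq_inv_smul_iff₀ two_ne_zero, two_smul, ← sub_eq_zero]
  rw [← sub_eq_zero] at hb
  rw [← hb]
  abel

theorem cartan_mul_lt_four {a b : V} (h : rootReflection a ≠ rootReflection b) :
    ⟪coroot a, b⟫ * ⟪coroot b, a⟫ < 4 := by
  have hcos : |⟪a, b⟫ / (‖a‖ * ‖b‖)| < 1 := by
    refine (abs_real_inner_div_norm_mul_norm_le_one a b).lt_of_ne fun h₁ => h ?_
    obtain ⟨-, r, hr, rfl⟩ := (abs_real_inner_div_norm_mul_norm_eq_one_iff a b).1 h₁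
    have hspan : (ℝ ∙ (r • a)) = ℝ ∙ a := Submodule.span_singleton_smul_eq hr.isUnit a
    simp only [rootReflection, hspan]
  calc ⟪coroot a, b⟫ * ⟪coroot b, a⟫ = 4 * (⟪a, b⟫ / (‖a‖ * ‖b‖)) ^ 2 := by
        simp only [coroot, real_inner_smul_left, real_inner_self_eq_norm_sq, real_inner_comm a b]
        ring
    _ < 4 := by linarith [(sq_lt_one_iff_abs_lt_one _).2 hcos]

/-- The orthogonal reflections of `V` in hyperplanes with a nonzero normal vector in `U`. -/
def reflectionsIn (U : Submodule ℝ V) : Set (V ≃ₗᵢ[ℝ] V) :=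
  {t | ∃ a ∈ U, a ≠ 0 ∧ rootReflection a = t}

/-- The stabilizer of the vector `v` in the group of linear isometries. -/
def isometryStabilizer (v : V) : Subgroup (V ≃ₗᵢ[ℝ] V) where
  carrier := {g | g v = v}
  one_mem' := rfl
  mul_mem' {g _} hg hh := (congrArg g hh).trans hg
  inv_mem' {g} hg := g.symm_apply_eq.2 (Eq.symm hg)

-- With `p` and `q` the gains of `s_a` and `s_b`, the gains of `s_a s_b` and `s_b s_a` are `p + q`
-- plus two corrections whose product is `4cos²∠(a, b) * p * q < 4pq`. If neither `s_a s_b` nor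
-- `s_b s_a` gained, that product would be at least `(p + q)² ≥ 4pq`.
theorem inner_lt_inner_rootReflection_rootReflection {a b u v : V}
    (hab : rootReflection a ≠ rootReflection b)
    (ha : ⟪u, v⟫ < ⟪rootReflection a u, v⟫) (hb : ⟪u, v⟫ ≤ ⟪rootReflection b u, v⟫) :
    ⟪u, v⟫ < ⟪rootReflection a (rootReflection b u), v⟫ ∨
      ⟪u, v⟫ < ⟪rootReflection b (rootReflection a u), v⟫ := by
  by_contra! hcon
  obtain ⟨hsab, hsba⟩ := hcon
  simp only [inner_rootReflection] at ha hb hsab hsba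
  set p := -(⟪u, a⟫ * ⟪coroot a, v⟫) with hp
  set q := -(⟪u, b⟫ * ⟪coroot b, v⟫) with hq
  have hp0 : 0 < p := by linarith
  have hq0 : 0 ≤ q := by linarith
  have hcorr : p + q ≤ -(⟪u, b⟫ * ⟪coroot b, a⟫ * ⟪coroot a, v⟫) := by linarith
  have hcorr' : p + q ≤ -(⟪u, a⟫ * ⟪coroot a, b⟫ * ⟪coroot b, v⟫) := by linarith
  have hsq : (p + q) * (p + q) ≤ ⟪coroot a, b⟫ * ⟪coroot b, a⟫ * (p * q) :=
    (mul_le_mul hcorr hcorr' (by linarith) (by linarith)).trans_eq (by rw [hp, hq]; ring)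
  rcases hq0.eq_or_lt with hq0 | hq0
  · rw [← hq0, add_zero, mul_zero, mul_zero] at hsq
    exact hsq.not_gt (mul_pos hp0 hp0)
  · have hlt := mul_lt_mul_of_pos_right (cartan_mul_lt_four hab) (mul_pos hp0 hq0)
    linarith [sq_nonneg (p - q)]

/-- The sum of `⟪g v, v⟫` over the products `g` of all suffixes of the tuple `l`. It is the
potential that the Hurwitz moves increase. -/
def suffixEnergy (v : V) (l : List (V ≃ₗᵢ[ℝ] V)) : ℝ :=
  (l.tails.map fun s => ⟪s.prod v, v⟫).sum

theorem suffixEnergy_cons (v : V) (t : V ≃ₗᵢ[ℝ] V) (l : List (V ≃ₗᵢ[ℝ] V)) :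
    suffixEnergy v (t :: l) = ⟪(t :: l).prod v, v⟫ + suffixEnergy v l := by
  simp only [suffixEnergy, List.tails_cons, List.map_cons, List.sum_cons]

theorem suffixEnergy_lt_of_mul_eq {v : V} {a b c d : V ≃ₗᵢ[ℝ] V} (h : a * b = c * d)
    (p s : List (V ≃ₗᵢ[ℝ] V)) (hlt : ⟪b (s.prod v), v⟫ < ⟪d (s.prod v), v⟫) :
    suffixEnergy v (p ++ a :: b :: s) < suffixEnergy v (p ++ c :: d :: s) := by
  have hprod : (a :: b :: s).prod = (c :: d :: s).prod := by
    simp only [List.prod_cons, ← mul_assoc, h]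
  induction p with
  | nil =>
    simp only [List.nil_append, suffixEnergy_cons, hprod]
    simpa [List.prod_cons, LinearIsometryEquiv.coe_mul] using hlt
  | cons t p ih =>
    have hprod' : (t :: (p ++ a :: b :: s)).prod = (t :: (p ++ c :: d :: s)).prod := by
      rw [List.prod_cons, List.prod_cons, List.prod_append, List.prod_append, hprod]
    rw [List.cons_append, List.cons_append, suffixEnergy_cons, suffixEnergy_cons, hprod']
    gcongr

theorem apply_eq_self_of_inner_self_le_inner {g : V ≃ₗᵢ[ℝ] V} {v : V}
    (h : ⟪v, v⟫ ≤ ⟪g v, v⟫) : g v = v := by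
  refine eq_of_norm_le_re_inner_eq_norm_sq (𝕜 := ℝ) (g.norm_map v).le (le_antisymm ?_ ?_)
  · simpa [sq] using real_inner_le_norm (g v) v
  · simpa using h

theorem exists_inner_valley {l : List (V ≃ₗᵢ[ℝ] V)} {v : V} (hl : l.prod v = v)
    (hmove : ∃ t ∈ l, t v ≠ v) :
    ∃ (P : List (V ≃ₗᵢ[ℝ] V)) (a b : V ≃ₗᵢ[ℝ] V) (S : List (V ≃ₗᵢ[ℝ] V)),
      l = P ++ a :: b :: S ∧ ⟪(b :: S).prod v, v⟫ < ⟪(a :: b :: S).prod v, v⟫ ∧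
      ⟪(b :: S).prod v, v⟫ ≤ ⟪S.prod v, v⟫ := by
  obtain ⟨s, hs, hlt⟩ : ∃ s, s <:+ l ∧ ⟪s.prod v, v⟫ < ⟪v, v⟫ := by
    by_contra! hge
    have hfix (s) (hs : s <:+ l) : s.prod v = v := apply_eq_self_of_inner_self_le_inner (hge s hs)
    obtain ⟨t, ht, htv⟩ := hmove
    obtain ⟨P, S, rfl⟩ := List.append_of_mem ht
    have hS : S.prod v = v := hfix S ((List.suffix_cons t S).trans (List.suffix_append P _))
    have htS : t (S.prod v) = v := by simpa using hfix (t :: S) (List.suffix_append P _)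
    exact htv (by rwa [hS] at htS)
  exact exists_suffix_valley (fun s : List (V ≃ₗᵢ[ℝ] V) => ⟪s.prod v, v⟫) hs hlt (by rwa [hl])

theorem exists_adjacent_eq_or_suffixEnergy_lt {l : List (V ≃ₗᵢ[ℝ] V)} {v : V}
    (hl : ∀ t ∈ l, ∃ a, rootReflection a = t) (hlv : l.prod v = v) (hmove : ∃ t ∈ l, t v ≠ v) :
    (∃ P t S, l = P ++ t :: t :: S) ∨
      ∃ l', HurwitzEquiv l l' ∧ suffixEnergy v l < suffixEnergy v l' := by
  obtain ⟨P, s, t, S, rfl, hs, ht⟩ := exists_inner_valley hlv hmove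
  obtain ⟨a, rfl⟩ := hl s (by simp)
  obtain ⟨b, rfl⟩ := hl t (by simp)
  by_cases hab : rootReflection a = rootReflection b
  · exact .inl ⟨P, rootReflection a, S, by rw [← hab]⟩
  refine .inr ?_
  set u := rootReflection b (S.prod v) with hu
  have hSu : S.prod v = rootReflection b u :=
    (rootReflection_rootReflection b (S.prod v)).symm
  replace hs : ⟪u, v⟫ < ⟪rootReflection a u, v⟫ := by simpa [hu] using hs
  replace ht : ⟪u, v⟫ ≤ ⟪rootReflection b u, v⟫ := by rw [← hSu]; simpa [hu] using ht
  rcases inner_lt_inner_rootReflection_rootReflection hab hs ht with h | h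
  · refine ⟨_, .conj_left P S _ _, suffixEnergy_lt_of_mul_eq (by group) P S ?_⟩
    rwa [← hu, hSu]
  · refine ⟨_, .conj_right P S _ _, suffixEnergy_lt_of_mul_eq (by group) P S ?_⟩
    simpa only [rootReflection_inv, LinearIsometryEquiv.coe_mul, Function.comp_apply, ← hu] using h

theorem exists_hurwitzEquiv_forall_apply_eq_self_or_adjacent_eq {T : Set (V ≃ₗᵢ[ℝ] V)}
    (hfin : T.Finite) (hT : ConjStable T) (hroot : ∀ t ∈ T, ∃ a, rootReflection a = t)
    {l : List (V ≃ₗᵢ[ℝ] V)} (hl : ∀ t ∈ l, t ∈ T) {v : V} (hlv : l.prod v = v) :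
    ∃ l', HurwitzEquiv l l' ∧ ((∀ t ∈ l', t v = v) ∨ ∃ P t S, l' = P ++ t :: t :: S) := by
  obtain ⟨l', hll', hmax⟩ := Set.exists_max_image {l' | HurwitzEquiv l l'} (suffixEnergy v)
    (HurwitzEquiv.finite_setOf hfin hT hl) ⟨l, .refl l⟩
  refine ⟨l', hll', or_iff_not_imp_left.2 fun hmove => ?_⟩
  push Not at hmove
  have hroot' : ∀ t ∈ l', ∃ a, rootReflection a = t := fun t ht =>
    hroot t ((hll'.forall_mem_iff hT).1 hl t ht)
  refine (exists_adjacent_eq_or_suffixEnergy_lt hroot' (hll'.prod_eq ▸ hlv) hmove).resolve_right ?_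
  rintro ⟨l'', hl'', hlt⟩
  exact (hmax l'' (hll'.trans hl'')).not_gt hlt

/-! ### Fixed vectors of products of reflections -/

theorem det_adjoint_real [FiniteDimensional ℝ V] (f : V →ₗ[ℝ] V) :
    LinearMap.det f.adjoint = LinearMap.det f := by
  let b := stdOrthonormalBasis ℝ V
  rw [← LinearMap.det_toMatrix b.toBasis, ← LinearMap.det_toMatrix b.toBasis,
    LinearMap.toMatrix_adjoint, Matrix.det_conjTranspose, star_trivial]

-- Taking determinants in `(g - 1)† * g = -(g - 1)` gives `det (g - 1) = 0`.
theorem exists_ne_zero_apply_eq_self [FiniteDimensional ℝ V] {g : V ≃ₗᵢ[ℝ] V}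
    (hg : LinearMap.det g.toLinearMap ≠ (-1) ^ Module.finrank ℝ V) : ∃ v ≠ 0, g v = v := by
  let G : V →ₗ[ℝ] V := g.toLinearMap
  have hadj : (G - 1).adjoint * G = -(G - 1) := by
    refine LinearMap.ext fun v => ext_inner_right ℝ fun w => ?_
    rw [Module.End.mul_apply, LinearMap.adjoint_inner_left]
    have hG : ⟪G v, G w⟫ = ⟪v, w⟫ := g.inner_map_map v w
    simp only [LinearMap.sub_apply, Module.End.one_apply, inner_sub_right, inner_sub_left, hG,
      neg_sub]
  have hdet : LinearMap.det (G - 1) = 0 := by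
    have h := congrArg LinearMap.det hadj
    rw [map_mul, det_adjoint_real, ← neg_one_smul ℝ (G - 1), LinearMap.det_smul, mul_comm] at h
    by_contra h₀
    exact hg (mul_right_cancel₀ h₀ h)
  obtain ⟨v, hv, hv₀⟩ :=
    Submodule.exists_mem_ne_zero_of_ne_bot (LinearMap.bot_lt_ker_of_det_eq_zero hdet).ne'
  exact ⟨v, hv₀, sub_eq_zero.1 hv⟩

theorem det_prod_of_mem_reflectionsIn [FiniteDimensional ℝ V] {U : Submodule ℝ V}
    {l : List (V ≃ₗᵢ[ℝ] V)} (hl : ∀ t ∈ l, t ∈ reflectionsIn U) :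
    LinearMap.det l.prod.toLinearMap = (-1) ^ l.length := by
  induction l with
  | nil => exact LinearMap.det_id
  | cons t l ih =>
    rw [List.forall_mem_cons] at hl
    obtain ⟨⟨a, -, ha, rfl⟩, hl⟩ := hl
    have ha' : LinearMap.det (rootReflection a).toLinearMap = -1 := by
      rw [rootReflection, Submodule.det_reflection, Submodule.orthogonal_orthogonal,
        finrank_span_singleton ha, pow_one]
    have hmul : (rootReflection a :: l).prod.toLinearMap =
      (rootReflection a).toLinearMap * l.prod.toLinearMap := by
      rw [List.prod_cons]; rfl
    rw [hmul, map_mul, ha', ih hl, List.length_cons, pow_succ']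

theorem exists_mem_ne_zero_prod_apply_eq_self [FiniteDimensional ℝ V] {U : Submodule ℝ V}
    {l : List (V ≃ₗᵢ[ℝ] V)} (hl : ∀ t ∈ l, t ∈ reflectionsIn U)
    (hlen : l.length = Module.finrank ℝ U + 1) : ∃ v ∈ U, v ≠ 0 ∧ l.prod v = v := by
  have hfix (z) (hz : z ∈ Uᗮ) : l.prod z = z := by
    refine (isometryStabilizer z).list_prod_mem fun t ht => ?_
    obtain ⟨a, ha, -, rfl⟩ := hl t ht
    exact rootReflection_apply_eq_self_iff.2 (Submodule.inner_right_of_mem_orthogonal ha hz)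
  have hdet : LinearMap.det (l.prod * U.reflection).toLinearMap ≠ (-1) ^ Module.finrank ℝ V := by
    have hmul : (l.prod * U.reflection).toLinearMap =
      l.prod.toLinearMap * U.reflection.toLinearMap := rfl
    rw [hmul, map_mul, det_prod_of_mem_reflectionsIn hl, Submodule.det_reflection, hlen, ← pow_add,
      add_right_comm, Submodule.finrank_add_finrank_orthogonal, pow_succ, mul_neg_one]
    exact neg_ne_self.2 (pow_ne_zero _ (by norm_num))
  obtain ⟨v, hv₀, hv⟩ := exists_ne_zero_apply_eq_self hdet
  obtain ⟨y, hy, z, hz, rfl⟩ := U.exists_add_mem_mem_orthogonal v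
  have hyz : l.prod y - z = y + z := by
    rw [← hv, LinearIsometryEquiv.coe_mul, Function.comp_apply, map_add,
      Submodule.reflection_mem_subspace_eq_self hy,
      Submodule.reflection_mem_subspace_orthogonalComplement_eq_neg hz, map_add, map_neg, hfix z hz,
      sub_eq_add_neg]
  have hz₀ : z = 0 := by
    have horth : ⟪y, z⟫ = 0 := Submodule.inner_right_of_mem_orthogonal hy hz
    have hgorth : ⟪l.prod y, z⟫ = 0 := by
      rw [← horth, ← l.prod.inner_map_map y z, hfix z hz]
    have h := congrArg (⟪·, z⟫) hyz
    simp only [inner_sub_left, inner_add_left, horth, hgorth] at h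
    exact (inner_self_eq_zero (𝕜 := ℝ)).1 (by linarith)
  subst hz₀
  exact ⟨y, hy, by simpa using hv₀, by simpa using hyz⟩

theorem reflectionsIn_inter_isometryStabilizer_subset (U : Submodule ℝ V) (v : V) :
    reflectionsIn U ∩ isometryStabilizer v ⊆ reflectionsIn (U ⊓ (ℝ ∙ v)ᗮ) := by
  rintro _ ⟨⟨a, haU, ha, rfl⟩, hav⟩
  have horth : ⟪a, v⟫ = 0 := rootReflection_apply_eq_self_iff.1 hav
  exact ⟨a, ⟨haU, Submodule.mem_orthogonal_singleton_iff_inner_left.2 horth⟩, ha, rfl⟩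

theorem finrank_inf_orthogonal_singleton_lt [FiniteDimensional ℝ V] {U : Submodule ℝ V} {v : V}
    (hv : v ∈ U) (hv₀ : v ≠ 0) :
    Module.finrank ℝ ↥(U ⊓ (ℝ ∙ v)ᗮ) < Module.finrank ℝ U := by
  refine Submodule.finrank_lt_finrank_of_lt (inf_lt_left.2 fun h => hv₀ ?_)
  exact inner_self_eq_zero.1 (Submodule.mem_orthogonal_singleton_iff_inner_left.1 (h hv))

theorem exists_hurwitzEquiv_append_pair [FiniteDimensional ℝ V] {U : Submodule ℝ V}
    {T : Set (V ≃ₗᵢ[ℝ] V)} (hfin : T.Finite) (hT : ConjStable T) (hTU : T ⊆ reflectionsIn U)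
    {l : List (V ≃ₗᵢ[ℝ] V)} (hl : ∀ t ∈ l, t ∈ T) (hlen : Module.finrank ℝ U < l.length) :
    ∃ P t, HurwitzEquiv l (P ++ [t, t]) := by
  induction hd : Module.finrank ℝ U using Nat.strong_induction_on generalizing U T l with
  | _ d ih =>
  subst hd
  wlog hlen' : l.length = Module.finrank ℝ U + 1 generalizing l
  · obtain ⟨P, t, h⟩ := this (l := l.take (Module.finrank ℝ U + 1))
      (fun t ht => hl t (List.mem_of_mem_take ht)) (by grind) (by grind)
    rw [← List.take_append_drop (Module.finrank ℝ U + 1) l]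
    exact h.exists_append_pair (l.drop _)
  obtain ⟨v, hvU, hv₀, hlv⟩ :=
    exists_mem_ne_zero_prod_apply_eq_self (fun t ht => hTU (hl t ht)) hlen'
  have hroot : ∀ t ∈ T, ∃ a, rootReflection a = t := fun t ht =>
    let ⟨a, _, _, hat⟩ := hTU ht
    ⟨a, hat⟩
  obtain ⟨l', hll', hfix | ⟨P, t, S, rfl⟩⟩ :=
    exists_hurwitzEquiv_forall_apply_eq_self_or_adjacent_eq hfin hT hroot hl hlv
  · have hsub : T ∩ isometryStabilizer v ⊆ reflectionsIn (U ⊓ (ℝ ∙ v)ᗮ) :=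
      (Set.inter_subset_inter_left _ hTU).trans
        (reflectionsIn_inter_isometryStabilizer_subset U v)
    have hrank := finrank_inf_orthogonal_singleton_lt hvU hv₀
    obtain ⟨P, t, h⟩ := ih _ hrank (hfin.subset Set.inter_subset_left)
      (hT.inter_subgroup (isometryStabilizer v)) hsub
      (fun t ht => ⟨(hll'.forall_mem_iff hT).1 hl t ht, hfix t ht⟩)
      (hrank.trans (hlen.trans_eq hll'.length_eq)) rfl
    exact ⟨P, t, hll'.trans h⟩
  · obtain ⟨Q, s, h⟩ := HurwitzEquiv.exists_append_pair (.refl (P ++ [t, t])) S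
    exact ⟨Q, s, hll'.trans (by simpa using h)⟩

/-! ### Affine reflections -/

theorem sAff_apply (a : V) (k : ℝ) (v : V) : sAff a k v = rootReflection a v + k • coroot a := by
  change v - (⟪v, a⟫ - k) • coroot a = _
  rw [rootReflection_apply, sub_smul]
  abel

theorem sAff_sub (a : V) (k : ℝ) (v w : V) :
    sAff a k (v - w) = sAff a k v - rootReflection a w := by
  rw [sAff_apply, sAff_apply, map_sub]
  abel

theorem sAff_mul_self (a : V) (k : ℝ) : sAff a k * sAff a k = 1 :=
  Equiv.ext (sAffFun_involutive a k)

theorem sAff_neg (a : V) (k : ℝ) : sAff (-a) (-k) = sAff a k := by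
  ext v
  change v - (⟪v, -a⟫ - -k) • coroot (-a) = v - (⟪v, a⟫ - k) • coroot a
  simp only [coroot, inner_neg_right, inner_neg_left, neg_neg]
  module

theorem sAff_conj (a b : V) (k l : ℝ) :
    sAff a k * sAff b l * (sAff a k)⁻¹ = sAff (rootReflection a b) (l - k * ⟪b, coroot a⟫) := by
  rw [inv_eq_of_mul_eq_one_left (sAff_mul_self a k)]
  ext v
  have hv : sAff a k (sAff a k v) = v := sAffFun_involutive a k v
  have hinner : ⟪sAff a k v, b⟫ = ⟪v, rootReflection a b⟫ + k * ⟪b, coroot a⟫ := by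
    rw [sAff_apply, inner_add_left, real_inner_smul_left, real_inner_comm b (coroot a),
      ← (rootReflection a).inner_map_map v, rootReflection_rootReflection]
  calc sAff a k (sAff b l (sAff a k v))
      = sAff a k (sAff a k v - (⟪sAff a k v, b⟫ - l) • coroot b) := rfl
    _ = v - (⟪v, rootReflection a b⟫ - (l - k * ⟪b, coroot a⟫)) •
          coroot (rootReflection a b) := by
        rw [sAff_sub, hv, map_smul, coroot_map, hinner, add_sub_assoc, sub_sub_eq_add_sub,
          add_sub_assoc]

/-- The affine reflection `s_{α,k}` of a root `α` together with its linear part. Hurwitz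
equivalences of tuples of linear parts lift to tuples of such pairs along `MonoidHom.snd`. -/
def reflectionPair {Φ : Set V} (p : Φ × ℤ) : Equiv.Perm V × (V ≃ₗᵢ[ℝ] V) :=
  (sAff p.1 p.2, rootReflection p.1)

namespace IsCrystRootSystem

variable {Φ : Set V}

theorem rootReflection_mem (hΦ : IsCrystRootSystem Φ) {α β : V} (hα : α ∈ Φ) (hβ : β ∈ Φ) :
    rootReflection α β ∈ Φ := by
  have h := hΦ.refl_mem α hα β hβ
  rwa [sAffFun, sub_zero, ← rootReflection_apply] at h

theorem exists_inner_coroot_eq_intCast (hΦ : IsCrystRootSystem Φ) {α β : V} (hα : α ∈ Φ)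
    (hβ : β ∈ Φ) : ∃ n : ℤ, ⟪β, coroot α⟫ = n := by
  obtain ⟨n, hn⟩ := hΦ.cryst α hα β hβ
  refine ⟨n, hn ▸ ?_⟩
  rw [coroot, real_inner_smul_right]
  ring

theorem conjStable_image_rootReflection (hΦ : IsCrystRootSystem Φ) :
    ConjStable (rootReflection '' Φ) := by
  refine .of_involutions ?_ ?_
  · rintro _ ⟨α, -, rfl⟩
    exact rootReflection_mul_self α
  · rintro _ ⟨α, hα, rfl⟩ _ ⟨β, hβ, rfl⟩
    exact ⟨_, hΦ.rootReflection_mem hα hβ, rootReflection_map _ _⟩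

theorem exists_sAff_eq_of_rootReflection_eq (hΦ : IsCrystRootSystem Φ) {α β : V} (hα : α ∈ Φ)
    (hβ : β ∈ Φ) (h : rootReflection α = rootReflection β) (k : ℤ) :
    ∃ k' : ℤ, sAff β k = sAff α k' := by
  obtain ⟨c, rfl⟩ := exists_eq_smul_of_rootReflection_eq h
  rcases hΦ.reduced α hα c hβ with rfl | rfl
  · exact ⟨k, by rw [one_smul]⟩
  · exact ⟨-k, by rw [neg_one_smul, Int.cast_neg, ← sAff_neg, neg_neg]⟩

theorem conjStable_range_reflectionPair (hΦ : IsCrystRootSystem Φ) :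
    ConjStable (Set.range (reflectionPair (Φ := Φ))) := by
  refine .of_involutions ?_ ?_
  · rintro _ ⟨p, rfl⟩
    exact Prod.ext (sAff_mul_self _ _) (rootReflection_mul_self _)
  · rintro _ ⟨⟨α, k⟩, rfl⟩ _ ⟨⟨β, l⟩, rfl⟩
    obtain ⟨n, hn⟩ := hΦ.exists_inner_coroot_eq_intCast α.2 β.2
    refine ⟨(⟨_, hΦ.rootReflection_mem α.2 β.2⟩, l - k * n),
      Prod.ext ?_ (rootReflection_map (rootReflection (α : V)) β)⟩
    simp only [reflectionPair, Prod.fst_mul, Prod.fst_inv, sAff_conj, hn]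
    push_cast
    rfl

theorem exists_hurwitzEquiv_map_rootReflection (hΦ : IsCrystRootSystem Φ) {L : List Φ}
    (hL : Module.finrank ℝ V < L.length) :
    ∃ P t, HurwitzEquiv (L.map fun α : Φ => rootReflection (α : V)) (P ++ [t, t]) := by
  have : FiniteDimensional ℝ V :=
    Module.finite_def.2 (Submodule.fg_def.2 ⟨Φ, hΦ.finite, hΦ.spanning⟩)
  refine exists_hurwitzEquiv_append_pair (U := ⊤) (hΦ.finite.image rootReflection)
    hΦ.conjStable_image_rootReflection ?_ ?_ ?_
  · rintro _ ⟨α, hα, rfl⟩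
    exact ⟨α, Submodule.mem_top, hΦ.ne_zero α hα, rfl⟩
  · exact List.forall_mem_map.2 fun α _ => ⟨α, α.2, rfl⟩
  · rwa [finrank_top, List.length_map]

theorem exists_hurwitzEquiv_map_sAff (hΦ : IsCrystRootSystem Φ) {L : List (Φ × ℤ)}
    (hL : Module.finrank ℝ V < L.length) :
    ∃ (D : List (Φ × ℤ)) (α : Φ) (k k' : ℤ),
      HurwitzEquiv (L.map fun p : Φ × ℤ => sAff (p.1 : V) p.2)
        ((D ++ [(α, k), (α, k')]).map fun p : Φ × ℤ => sAff (p.1 : V) p.2) := by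
  obtain ⟨P, t, hPt⟩ :=
    hΦ.exists_hurwitzEquiv_map_rootReflection (L := L.map Prod.fst) (by rwa [List.length_map])
  obtain ⟨M, hLM, hM⟩ := HurwitzEquiv.exists_of_map (l := L.map reflectionPair) (m' := P ++ [t, t])
    (MonoidHom.snd (Equiv.Perm V) (V ≃ₗᵢ[ℝ] V)) (by rw [List.map_map] at hPt ⊢; exact hPt)
  obtain ⟨N, rfl⟩ : M ∈ Set.range (List.map (reflectionPair (Φ := Φ))) := by
    rw [Set.range_list_map]
    exact (hLM.forall_mem_iff hΦ.conjStable_range_reflectionPair).1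
      (List.forall_mem_map.2 fun p _ => ⟨p, rfl⟩)
  rw [List.map_map] at hM
  obtain ⟨D, E, rfl, -, hE⟩ := List.map_eq_append_iff.1 hM
  obtain ⟨⟨α, k⟩, _, rfl, hα, hE⟩ := List.map_eq_cons_iff.1 hE
  obtain ⟨⟨β, l⟩, _, rfl, hβ, hE⟩ := List.map_eq_cons_iff.1 hE
  obtain rfl := List.map_eq_nil_iff.1 hE
  obtain ⟨k', hk'⟩ :=
    hΦ.exists_sAff_eq_of_rootReflection_eq α.2 β.2 (hα.trans hβ.symm) l
  refine ⟨D, α, k, k', ?_⟩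
  have h := hLM.map (MonoidHom.fst (Equiv.Perm V) (V ≃ₗᵢ[ℝ] V))
  rw [List.map_map, List.map_map] at h
  simpa [reflectionPair, Function.comp_def, ← hk'] using h

end IsCrystRootSystem

theorem statement_9_general (Φ : Set V) (hΦ : IsCrystRootSystem Φ) (m : ℕ)
    (hm : Module.finrank ℝ V + 1 ≤ m) (β : Fin m → V) (hβ : ∀ i, β i ∈ Φ) (k : Fin m → ℤ) :
    ∃ (β' : Fin m → V) (k' : Fin m → ℤ),
      (∀ i, β' i ∈ Φ) ∧
      (∀ i j : Fin m, m - 2 ≤ (i : ℕ) → m - 2 ≤ (j : ℕ) → β' i = β' j) ∧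
      HurwitzEquiv (List.ofFn fun i => sAff (β i) (k i : ℝ))
        (List.ofFn fun i => sAff (β' i) (k' i : ℝ)) := by
  let L : List (Φ × ℤ) := List.ofFn fun i => (⟨β i, hβ i⟩, k i)
  obtain ⟨D, α, l, l', h⟩ := hΦ.exists_hurwitzEquiv_map_sAff (L := L) (by simpa [L] using hm)
  have hlen : m = D.length + 2 := by simpa [L] using h.length_eq
  subst hlen
  let E : Fin (D.length + 2) → Φ × ℤ := Fin.append D.get ![(α, l), (α, l')]
  refine ⟨fun i => (E i).1, fun i => (E i).2, fun i => (E i).1.2, ?_, ?_⟩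
  · have hE : ∀ i : Fin (D.length + 2), D.length ≤ i → (E i).1 = α := by
      refine Fin.addCases (fun i hi => absurd hi i.2.not_ge) fun i _ => ?_
      fin_cases i <;> simp [E]
    intro i j hi hj
    exact congrArg Subtype.val ((hE i hi).trans (hE j hj).symm)
  · have hofFn : List.ofFn E = D ++ [(α, l), (α, l')] := by
      rw [List.ofFn_fin_append, List.ofFn_get]
      rfl
    simpa [L, ← hofFn, List.map_ofFn, Function.comp_def] using h

theorem statement_9 (Φ : Set V) (hΦ : IsCrystRootSystem Φ)
    (n : ℕ) (hrank : Module.finrank ℝ V = n)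
    (x : Equiv.Perm V) (hx : x ∈ AffWeylGroup Φ)
    (m : ℕ) (hm : n + 1 ≤ m) (hlen : reflLength (AffReflections Φ) x = m)
    (β : Fin m → V) (hβ : ∀ i, β i ∈ Φ) (k : Fin m → ℤ)
    (hfac : (List.ofFn fun i => sAff (β i) (k i : ℝ)).prod = x) :
    ∃ (β' : Fin m → V) (k' : Fin m → ℤ),
      (∀ i, β' i ∈ Φ) ∧
      (∀ i j : Fin m, m - 2 ≤ (i : ℕ) → m - 2 ≤ (j : ℕ) → β' i = β' j) ∧
      HurwitzEquiv (List.ofFn fun i => sAff (β i) (k i : ℝ))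
        (List.ofFn fun i => sAff (β' i) (k' i : ℝ)) := by
  subst hrank
  exact statement_9_general Φ hΦ m hm β hβ k

end
end

section
/- Let Φ be an irreducible crystallographic root system which is not simply-laced, with affine Weyl group W. If there exist roots α_1,…,α_n ∈ Φ such that W = ⟨s_{α_1},…,s_{α_n}, s_{α_n,1}⟩, then α_n is a long root. -/
open scoped RealInnerProductSpace

noncomputable section

variable {V : Type*} [NormedAddCommGroup V] [InnerProductSpace ℝ V]

/-!
Suppose that `W` is generated by the finite Weyl group and one reflection `s_{β,1}`, and let `L` be
the lattice spanned by the coroots of the roots that are as long as `β`. The finite Weyl group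
permutes these coroots, and `s_{β,1}` is `s_β` followed by the translation by `β^∨ ∈ L`, so `W`
preserves `L`. For every root `γ` it follows that `γ^∨ = s_{γ,1}(0)` lies in `L`. By integrality of
the Cartan numbers, the squared length of each vector of `L` is an integral multiple of `4/(β|β)`.
Hence `4/(γ|γ)` is such a multiple, and `γ` is at most as long as `β`.
-/

section InnerClosure

variable {S : Set V} {A : AddSubgroup ℝ} {x y : V}

theorem inner_mem_of_mem_closure (hS : ∀ u ∈ S, ∀ v ∈ S, ⟪u, v⟫ ∈ A)
    (hx : x ∈ AddSubgroup.closure S) (hy : y ∈ AddSubgroup.closure S) : ⟪x, y⟫ ∈ A := by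
  induction hx, hy using AddSubgroup.closure_induction₂ with
  | mem u v hu hv => exact hS u hu v hv
  | zero_left v _ => simp only [inner_zero_left, zero_mem]
  | zero_right u _ => simp only [inner_zero_right, zero_mem]
  | add_left u v w _ _ _ huw hvw => simpa only [inner_add_left] using add_mem huw hvw
  | add_right u v w _ _ _ huv huw => simpa only [inner_add_right] using add_mem huv huw
  | neg_left u v _ _ huv => simpa only [inner_neg_left] using neg_mem huv
  | neg_right u v _ _ huv => simpa only [inner_neg_right] using neg_mem huv

theorem inner_self_mem_of_mem_closure (hself : ∀ u ∈ S, ⟪u, u⟫ ∈ A)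
    (htwo : ∀ u ∈ S, ∀ v ∈ S, 2 * ⟪u, v⟫ ∈ A) (hx : x ∈ AddSubgroup.closure S) :
    ⟪x, x⟫ ∈ A := by
  induction hx using AddSubgroup.closure_induction with
  | mem u hu => exact hself u hu
  | zero => simp only [inner_zero_left, zero_mem]
  | add u v hu hv huu hvv =>
    have huv : 2 * ⟪u, v⟫ ∈ A :=
      inner_mem_of_mem_closure (A := A.comap (AddMonoidHom.mulLeft 2)) htwo hu hv
    rw [real_inner_add_add_self]
    exact add_mem (add_mem huu huv) hvv
  | neg u _ huu => rwa [inner_neg_neg]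

end InnerClosure

section Coroot

variable {V' : Type*} [NormedAddCommGroup V'] [InnerProductSpace ℝ V']

theorem coroot_map_s15 (f : V →ₗᵢ[ℝ] V') (α : V) : coroot (f α) = f (coroot α) := by
  simp only [coroot, f.inner_map_map, map_smul]

theorem inner_coroot_self (α : V) : ⟪coroot α, coroot α⟫ = 4 / ⟪α, α⟫ := by
  rcases eq_or_ne α 0 with rfl | hα
  · simp only [coroot, smul_zero, inner_zero_left, div_zero]
  · have hαα : ⟪α, α⟫ ≠ 0 := inner_self_ne_zero.mpr hα
    simp only [coroot, real_inner_smul_left, real_inner_smul_right]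
    field_simp
    norm_num

theorem two_mul_inner_coroot_coroot (α β : V) :
    2 * ⟪coroot α, coroot β⟫ = 2 * ⟪α, β⟫ / ⟪β, β⟫ * (4 / ⟪α, α⟫) := by
  simp only [coroot, real_inner_smul_left, real_inner_smul_right]
  ring

theorem sAffFun_eq_reflection_add (α : V) (k : ℝ) (v : V) :
    sAffFun α k v = (ℝ ∙ α)ᗮ.reflection v + k • coroot α := by
  rw [Submodule.reflection_orthogonal_apply, Submodule.reflection_singleton_apply, sAffFun, coroot,
    real_inner_comm, RCLike.ofReal_real_eq_id, id_eq, ← real_inner_self_eq_norm_sq]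
  module

theorem sAff_zero (α : V) (k : ℝ) : sAff α k 0 = k • coroot α := by
  rw [sAff, Function.Involutive.coe_toPerm, sAffFun_eq_reflection_add, map_zero, zero_add]

end Coroot

section CorootLattice

variable {Φ : Set V} {a : ℝ} {x β γ : V}

/-- The lattice spanned by the coroots of the roots of squared length `a`. For `a = (β|β)` it is
preserved by the group generated by the Weyl group and `s_{β,1}`. -/
def corootLattice (Φ : Set V) (a : ℝ) : AddSubgroup V :=
  AddSubgroup.closure (coroot '' {β ∈ Φ | ⟪β, β⟫ = a})

theorem coroot_mem_corootLattice (hβ : β ∈ Φ) : coroot β ∈ corootLattice Φ ⟪β, β⟫ :=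
  AddSubgroup.subset_closure (Set.mem_image_of_mem coroot ⟨hβ, rfl⟩)

theorem map_mem_corootLattice (f : V →ₗᵢ[ℝ] V) (hf : Set.MapsTo f Φ Φ)
    (hx : x ∈ corootLattice Φ a) : f x ∈ corootLattice Φ a := by
  suffices h : corootLattice Φ a ≤ (corootLattice Φ a).comap f.toLinearMap.toAddMonoidHom from h hx
  refine (AddSubgroup.closure_le _).mpr ?_
  rintro _ ⟨β, ⟨hβ, rfl⟩, rfl⟩
  have hfβ : coroot (f β) ∈ corootLattice Φ ⟪f β, f β⟫ := coroot_mem_corootLattice (hf hβ)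
  rwa [coroot_map_s15, f.inner_map_map] at hfβ

theorem IsCrystRootSystem.mapsTo_reflection (hΦ : IsCrystRootSystem Φ) (hβ : β ∈ Φ) :
    Set.MapsTo (ℝ ∙ β)ᗮ.reflection Φ Φ := fun γ hγ => by
  simpa only [sAffFun_eq_reflection_add, zero_smul, add_zero] using hΦ.refl_mem β hβ γ hγ

theorem IsCrystRootSystem.inner_self_mem_zmultiples_of_mem_corootLattice (hΦ : IsCrystRootSystem Φ)
    (hx : x ∈ corootLattice Φ a) : ⟪x, x⟫ ∈ AddSubgroup.zmultiples (4 / a) := by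
  refine inner_self_mem_of_mem_closure ?_ ?_ hx
  · rintro _ ⟨β, ⟨-, rfl⟩, rfl⟩
    rw [inner_coroot_self]
    exact AddSubgroup.mem_zmultiples _
  · rintro _ ⟨β, ⟨hβ, rfl⟩, rfl⟩ _ ⟨γ, ⟨hγ, -⟩, rfl⟩
    obtain ⟨m, hm⟩ := hΦ.cryst γ hγ β hβ
    exact AddSubgroup.mem_zmultiples_iff.mpr
      ⟨m, by rw [two_mul_inner_coroot_coroot, hm, zsmul_eq_mul]⟩

theorem IsCrystRootSystem.inner_self_le_of_coroot_mem_corootLattice (hΦ : IsCrystRootSystem Φ)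
    (ha : 0 < a) (hγ : γ ∈ Φ) (hmem : coroot γ ∈ corootLattice Φ a) : ⟪γ, γ⟫ ≤ a := by
  have hγpos : 0 < ⟪γ, γ⟫ := real_inner_self_pos.mpr (hΦ.ne_zero γ hγ)
  obtain ⟨m, hm⟩ := AddSubgroup.mem_zmultiples_iff.mp
    (hΦ.inner_self_mem_zmultiples_of_mem_corootLattice hmem)
  rw [inner_coroot_self] at hm
  have hm_pos : 0 < m := by
    have hlt : (0 : ℤ) • (4 / a) < m • (4 / a) := by
      rw [zero_zsmul, hm]
      positivity
    exact (zsmul_lt_zsmul_iff_left (div_pos four_pos ha)).mp hlt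
  have hle : 4 / a ≤ 4 / ⟪γ, γ⟫ := calc
    4 / a = (1 : ℤ) • (4 / a) := (one_zsmul _).symm
    _ ≤ m • (4 / a) := zsmul_le_zsmul_left (div_pos four_pos ha).le hm_pos
    _ = 4 / ⟪γ, γ⟫ := hm
  exact (div_le_div_iff_of_pos_left four_pos ha hγpos).mp hle

end CorootLattice

section Stabilizer

open MulAction
open scoped Pointwise

variable {Φ : Set V} {a k : ℝ} {β γ : V}

theorem sAff_mem_stabilizer_corootLattice (hΦ : IsCrystRootSystem Φ) (hβ : β ∈ Φ)
    (hk : k • coroot β ∈ corootLattice Φ a) :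
    sAff β k ∈ stabilizer (Equiv.Perm V) (corootLattice Φ a : Set V) := by
  have hmap : ∀ x ∈ corootLattice Φ a, sAffFun β k x ∈ corootLattice Φ a := fun x hx => by
    rw [sAffFun_eq_reflection_add]
    exact add_mem (map_mem_corootLattice (ℝ ∙ β)ᗮ.reflection.toLinearIsometry
      (hΦ.mapsTo_reflection hβ) hx) hk
  refine mem_stabilizer_set.mpr fun x => ⟨fun hx => ?_, hmap x⟩
  exact sAffFun_involutive β k x ▸ hmap _ hx

theorem weylGroup_le_stabilizer_corootLattice (hΦ : IsCrystRootSystem Φ) (a : ℝ) :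
    WeylGroup Φ ≤ stabilizer (Equiv.Perm V) (corootLattice Φ a : Set V) := by
  refine (Subgroup.closure_le _).mpr ?_
  rintro _ ⟨β, hβ, rfl⟩
  exact sAff_mem_stabilizer_corootLattice hΦ hβ (by simp only [zero_smul, zero_mem])

theorem coroot_mem_corootLattice_of_affWeylGroup_le_stabilizer
    (hle : AffWeylGroup Φ ≤ stabilizer (Equiv.Perm V) (corootLattice Φ a : Set V))
    (hγ : γ ∈ Φ) : coroot γ ∈ corootLattice Φ a := by
  have hmem : sAff γ 1 ∈ AffWeylGroup Φ :=
    Subgroup.subset_closure ⟨γ, hγ, 1, by rw [Int.cast_one]⟩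
  have hzero := (mem_stabilizer_set.mp (hle hmem) 0).mpr (zero_mem (corootLattice Φ a))
  rwa [Equiv.Perm.smul_def, sAff_zero, one_smul] at hzero

theorem closure_range_sAff_union_le {ι : Type*} {α : ι → V} (hα : ∀ i, α i ∈ Φ) (β : V) (k : ℝ) :
    Subgroup.closure ((Set.range fun i => sAff (α i) 0) ∪ {sAff β k}) ≤
      WeylGroup Φ ⊔ Subgroup.zpowers (sAff β k) := by
  have hrange : (Set.range fun i => sAff (α i) 0) ⊆ {g | ∃ α ∈ Φ, g = sAff α 0} :=
    Set.range_subset_iff.mpr fun i => ⟨α i, hα i, rfl⟩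
  rw [Subgroup.closure_union, ← Subgroup.zpowers_eq_closure]
  exact sup_le_sup_right (Subgroup.closure_mono hrange) _

theorem statement_15_general (hΦ : IsCrystRootSystem Φ) (hβ : β ∈ Φ)
    (hgen : AffWeylGroup Φ ≤ WeylGroup Φ ⊔ Subgroup.zpowers (sAff β 1)) (hγ : γ ∈ Φ) :
    ⟪γ, γ⟫ ≤ ⟪β, β⟫ := by
  have hstab : AffWeylGroup Φ ≤
      stabilizer (Equiv.Perm V) (corootLattice Φ ⟪β, β⟫ : Set V) := by
    refine hgen.trans (sup_le (weylGroup_le_stabilizer_corootLattice hΦ _) ?_)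
    refine Subgroup.zpowers_le.mpr (sAff_mem_stabilizer_corootLattice hΦ hβ ?_)
    simpa only [one_smul] using coroot_mem_corootLattice hβ
  exact hΦ.inner_self_le_of_coroot_mem_corootLattice
    (real_inner_self_pos.mpr (hΦ.ne_zero β hβ)) hγ
    (coroot_mem_corootLattice_of_affWeylGroup_le_stabilizer hstab hγ)

end Stabilizer

theorem statement_15 (Φ : Set V) (hΦ : IsCrystRootSystem Φ) (hirr : IsIrreducibleRS Φ)
    (n : ℕ) (hn : 0 < n) (hrank : Module.finrank ℝ V = n)
    (a b : ℝ) (hab : a < b)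
    (hall : ∀ γ ∈ Φ, ⟪γ, γ⟫ = a ∨ ⟪γ, γ⟫ = b)
    (hshort : ∃ γ ∈ Φ, ⟪γ, γ⟫ = a) (hlong : ∃ γ ∈ Φ, ⟪γ, γ⟫ = b)
    (α : Fin n → V) (hα : ∀ i, α i ∈ Φ)
    (hgen : AffWeylGroup Φ = Subgroup.closure
      ((Set.range fun i => sAff (α i) 0) ∪ {sAff (α ⟨n - 1, by omega⟩) 1})) :
    ⟪α ⟨n - 1, by omega⟩, α ⟨n - 1, by omega⟩⟫ = b := by
  obtain ⟨γ, hγ, rfl⟩ := hlong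
  exact (hall _ (hα _)).resolve_left (hab.trans_le (statement_15_general hΦ (hα _)
    (hgen.le.trans (closure_range_sAff_union_le hα _ _)) hγ)).ne'

end
end
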